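/- The sum over n from 1 to infinity of ((H_{n-1}² − H_{n-1}^{(2)})/(n·4^n))·C(2n,n) equals 4ζ(3) + (8/3)(ln 2)³ + (2π²/3)·ln 2. -/

import Mathlib

open Finset Real

noncomputable def H (n : ℕ) : ℝ := ∑ i ∈ Finset.range n, 1/((i:ℝ)+1)

noncomputable def H2 (n : ℕ) : ℝ := ∑ i ∈ Finset.range n, 1/((i:ℝ)+1)^2

noncomputable def H3 (n : ℕ) : ℝ := ∑ i ∈ Finset.range n, 1/((i:ℝ)+1)^3

noncomputable def hh (r n : ℕ) : ℝ := (Nat.choose (n+r-1) (r-1)) * (H (n+r-1) - H (r-1))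

noncomputable def zeta3 : ℝ := ∑' n : ℕ, 1/((n:ℝ)+1)^3

/-!
Regard `F(a) = ₂F₁(a, b; c; 1)` as a formal power series in `a`. Contiguity relates its values at
`c` and `c + 1`, and it tends to `1` as `c → ∞`. The series `L(a) = ψ(c - a) - ψ(c - b - a)`
transforms in the matching way and tends to `0`, so comparing at `c = ∞` gives `F' = F L`, the
logarithmic derivative of Gauss's summation theorem. This expresses the coefficients of `F` through
those of `L`, which at `b = 1/2`, `c = 1` are `2 log 2`, `π² / 3`, `6 ζ(3)`. Since
`C(2m, m) / 4 ^ m = (1/2)_m / m!` and the coefficient of `a³` in `(a)_{n+1}` is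
`n! (H_n² - H_n^{(2)}) / 2`, the required sum is twice the coefficient of `a³` in `F`.
-/

open Filter Topology Asymptotics PowerSeries
open scoped Nat Polynomial PowerSeries.WithPiTopology

/-! ### The rising factorial -/

theorem ascPochhammer_eval_eq_prod_range {R : Type*} [CommSemiring R] (n : ℕ) (r : R) :
    (ascPochhammer R n).eval r = ∏ j ∈ range n, (r + j) := by
  induction n with
  | zero => simp
  | succ n ih => rw [ascPochhammer_succ_eval, ih, prod_range_succ]

theorem ascPochhammer_succ_eval_left {R : Type*} [CommSemiring R] (n : ℕ) (r : R) :
    (ascPochhammer R (n + 1)).eval r = r * (ascPochhammer R n).eval (r + 1) := by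
  simp [ascPochhammer_succ_left]

theorem ascPochhammer_eval_add_one {K : Type*} [Field K] {c : K} (hc : c ≠ 0) (m : ℕ) :
    (ascPochhammer K m).eval (c + 1) = (ascPochhammer K m).eval c * (c + m) / c := by
  rw [← ascPochhammer_succ_eval, ascPochhammer_succ_eval_left, mul_div_cancel_left₀ _ hc]

theorem ascPochhammer_eval_one_half (n : ℕ) :
    (ascPochhammer ℝ n).eval (1 / 2) = n ! * ((2 * n).choose n / 4 ^ n) := by
  induction n with
  | zero => simp
  | succ n ih =>
    have hchoose : ((n : ℝ) + 1) * (2 * (n + 1)).choose (n + 1) =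
        2 * (2 * n + 1) * (2 * n).choose n := by
      exact_mod_cast Nat.succ_mul_centralBinom_succ n
    rw [ascPochhammer_succ_eval, ih, Nat.factorial_succ, pow_succ]
    push_cast
    field_simp
    linear_combination -2 * hchoose

theorem monotoneOn_ascPochhammer_eval {R : Type*} [CommSemiring R] [PartialOrder R]
    [IsOrderedRing R] (n : ℕ) :
    MonotoneOn (fun x : R => (ascPochhammer R n).eval x) (Set.Ici 0) := by
  intro x hx y _ hxy
  have hx' : 0 ≤ x := hx
  simp only [ascPochhammer_eval_eq_prod_range]
  gcongr

theorem coeff_ascPochhammer_nonneg {R : Type*} [Semiring R] [PartialOrder R] [IsOrderedRing R]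
    (n j : ℕ) : 0 ≤ (ascPochhammer R n).coeff j := by
  rw [← ascPochhammer_map (Nat.castRingHom R), Polynomial.coeff_map]
  exact Nat.cast_nonneg _

theorem ascPochhammer_succ_coeff_succ {R : Type*} [CommSemiring R] (n j : ℕ) :
    (ascPochhammer R (n + 1)).coeff (j + 1) =
      (ascPochhammer R n).coeff j + n * (ascPochhammer R n).coeff (j + 1) := by
  rw [ascPochhammer_succ_right, mul_add, Polynomial.coeff_add, Polynomial.coeff_mul_X,
    Polynomial.coeff_mul_natCast, mul_comm (n : R)]

theorem H_succ (n : ℕ) : H (n + 1) = H n + 1 / ((n : ℝ) + 1) :=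
  sum_range_succ _ _

theorem H2_succ (n : ℕ) : H2 (n + 1) = H2 n + 1 / ((n : ℝ) + 1) ^ 2 :=
  sum_range_succ _ _

theorem ascPochhammer_succ_coeff_one (n : ℕ) : (ascPochhammer ℝ (n + 1)).coeff 1 = n ! := by
  induction n with
  | zero => simp
  | succ n ih =>
    rw [ascPochhammer_succ_coeff_succ, ih, Polynomial.coeff_zero_eq_eval_zero,
      ascPochhammer_ne_zero_eval_zero _ n.succ_ne_zero, Nat.factorial_succ]
    push_cast
    ring

theorem ascPochhammer_succ_coeff_two (n : ℕ) :
    (ascPochhammer ℝ (n + 1)).coeff 2 = n ! * H n := by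
  induction n with
  | zero => simp [H, Polynomial.coeff_X]
  | succ n ih =>
    rw [ascPochhammer_succ_coeff_succ, ih, ascPochhammer_succ_coeff_one, H_succ,
      Nat.factorial_succ]
    push_cast
    field_simp
    ring

theorem ascPochhammer_succ_coeff_three (n : ℕ) :
    (ascPochhammer ℝ (n + 1)).coeff 3 = n ! * ((H n ^ 2 - H2 n) / 2) := by
  induction n with
  | zero => simp [H, H2, Polynomial.coeff_X]
  | succ n ih =>
    rw [ascPochhammer_succ_coeff_succ, ih, ascPochhammer_succ_coeff_two, H_succ, H2_succ,
      Nat.factorial_succ]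
    push_cast
    field_simp
    ring

theorem tendsto_ascPochhammer_eval_div_factorial_mul_rpow {s : ℝ} (hs : 0 < s) :
    Tendsto (fun n : ℕ => (ascPochhammer ℝ n).eval s / (n ! * (n : ℝ) ^ (s - 1))) atTop
      (𝓝 (Gamma s)⁻¹) := by
  have hratio : Tendsto (fun n : ℕ => (n : ℝ) / (n + s)) atTop (𝓝 1) :=
    tendsto_natCast_div_add_atTop s
  have hlim := hratio.mul ((GammaSeq_tendsto_Gamma s).inv₀ (Gamma_pos_of_pos hs).ne')
  rw [one_mul] at hlim
  refine hlim.congr' ?_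
  filter_upwards [eventually_gt_atTop 0] with n hn
  have hprod : ∏ j ∈ range (n + 1), (s + j) = (ascPochhammer ℝ n).eval s * (s + n) := by
    rw [← ascPochhammer_succ_eval, ascPochhammer_eval_eq_prod_range]
  rw [GammaSeq, hprod, rpow_sub_one (by positivity)]
  field_simp
  ring

theorem isTheta_ascPochhammer_eval {s : ℝ} (hs : 0 < s) :
    (fun n : ℕ => (ascPochhammer ℝ n).eval s) =Θ[atTop] fun n => (n ! : ℝ) * (n : ℝ) ^ (s - 1) :=
  (isTheta_of_div_tendsto_nhds_ne_zero
    (tendsto_ascPochhammer_eval_div_factorial_mul_rpow hs)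
    (inv_ne_zero (Gamma_pos_of_pos hs).ne')).symm

theorem isTheta_ordinaryHypergeometricCoefficient {a b c : ℝ} (ha : 0 < a) (hb : 0 < b)
    (hc : 0 < c) :
    ordinaryHypergeometricCoefficient a b c =Θ[atTop] fun n : ℕ => (n : ℝ) ^ (a + b - c - 1) := by
  refine ((((isTheta_refl (fun n : ℕ => (n ! : ℝ)⁻¹) atTop).mul
    (isTheta_ascPochhammer_eval ha)).mul (isTheta_ascPochhammer_eval hb)).mul
    (isTheta_ascPochhammer_eval hc).inv).trans_eventuallyEq ?_
  filter_upwards [eventually_gt_atTop 0] with n hn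
  have hn' : (0 : ℝ) < n := Nat.cast_pos.mpr hn
  have hexp : a + b - c - 1 = a - 1 + (b - 1) - (c - 1) := by ring
  rw [hexp, rpow_sub hn' (a - 1 + (b - 1)), rpow_add hn']
  field_simp

theorem summable_ordinaryHypergeometricCoefficient {a b c : ℝ} (ha : 0 < a) (hb : 0 < b)
    (hc : a + b < c) : Summable (ordinaryHypergeometricCoefficient a b c) :=
  summable_of_isBigO_nat (Real.summable_nat_rpow.mpr (by linarith))
    (isTheta_ordinaryHypergeometricCoefficient ha hb (by linarith)).isBigO

theorem tendsto_mul_ordinaryHypergeometricCoefficient {a b c : ℝ} (ha : 0 < a) (hb : 0 < b)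
    (hc : a + b < c) :
    Tendsto (fun n : ℕ => (n : ℝ) * ordinaryHypergeometricCoefficient a b c n) atTop (𝓝 0) := by
  have hO := (isBigO_refl (fun n : ℕ => (n : ℝ)) atTop).mul
    (isTheta_ordinaryHypergeometricCoefficient ha hb (by linarith : 0 < c)).isBigO
  refine hO.trans_tendsto (((tendsto_rpow_neg_atTop (sub_pos.mpr hc)).comp
    tendsto_natCast_atTop_atTop).congr' ?_)
  filter_upwards [eventually_gt_atTop 0] with n hn
  have hn' : (n : ℝ) ≠ 0 := by positivity
  rw [Function.comp_apply, rpow_sub_one hn', mul_div_cancel₀ _ hn']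
  ring_nf

/-! ### Polynomials and formal power series -/

theorem coeff_mul_pow_le_eval {R : Type*} [Semiring R] [PartialOrder R] [IsOrderedRing R]
    {p : R[X]} (hp : ∀ i, 0 ≤ p.coeff i) {x : R} (hx : 0 ≤ x) (j : ℕ) :
    p.coeff j * x ^ j ≤ p.eval x := by
  have hdeg : p.natDegree < p.natDegree + j + 1 := by omega
  rw [Polynomial.eval_eq_sum_range' hdeg]
  exact single_le_sum (f := fun i => p.coeff i * x ^ i)
    (fun i _ => mul_nonneg (hp i) (pow_nonneg hx i)) (mem_range.mpr (by omega))

theorem one_sub_C_mul_X_mul_mk_pow_succ {R : Type*} [CommRing R] (r : R) :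
    (1 - C r * X) * PowerSeries.mk (fun i => r ^ (i + 1)) = C r := by
  ext i
  rw [sub_mul, one_mul, mul_assoc, map_sub, coeff_C_mul]
  cases i with
  | zero => simp
  | succ i => simp [coeff_succ_X_mul, pow_succ']

theorem tendsto_derivative {R : Type*} [CommSemiring R] [TopologicalSpace R]
    [IsTopologicalSemiring R] {ι : Type*} {l : Filter ι} {F : ι → R⟦X⟧} {G : R⟦X⟧}
    (h : Tendsto F l (𝓝 G)) : Tendsto (fun i => d⁄dX R (F i)) l (𝓝 (d⁄dX R G)) := by
  rw [WithPiTopology.tendsto_iff_coeff_tendsto] at h ⊢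
  intro j
  simpa only [coeff_derivative] using (h (j + 1)).mul_const _

theorem eq_zero_of_one_sub_mul_eq_of_tendsto_zero {R : Type*} [CommRing R] [TopologicalSpace R]
    [T2Space R] {u v : ℕ → R} {D : ℕ → R⟦X⟧}
    (hD : ∀ N, (1 - C (v N) * X) * D N = (1 - C (u N) * X) * D (N + 1))
    (hlim : Tendsto D atTop (𝓝 0)) (N : ℕ) : D N = 0 := by
  have hconst {j : ℕ} (hstep : ∀ N, coeff j (D N) = coeff j (D (N + 1))) (N : ℕ) :
      coeff j (D N) = 0 := by
    have hshift (M : ℕ) : coeff j (D (M + N)) = coeff j (D N) := by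
      induction M with
      | zero => rw [zero_add]
      | succ M ih => rw [← ih, hstep (M + N), Nat.add_right_comm]
    have htail := ((WithPiTopology.tendsto_iff_coeff_tendsto R _ _ _).mp hlim j).comp
      (tendsto_add_atTop_nat N)
    simp only [Function.comp_def, hshift, map_zero] at htail
    exact tendsto_nhds_unique tendsto_const_nhds htail
  have hcoeff (j : ℕ) : ∀ N, coeff j (D N) = 0 := by
    induction j with
    | zero => exact hconst fun N => by simpa using congrArg (coeff 0) (hD N)
    | succ j ih =>
      refine hconst fun N => ?_
      simpa [sub_mul, mul_assoc, coeff_succ_X_mul, ih] using congrArg (coeff (j + 1)) (hD N)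
  ext j
  exact hcoeff j N

theorem coeff_three_of_derivative_eq_mul {K : Type*} [Field K] [CharZero K] {F L : K⟦X⟧}
    (hF : constantCoeff F = 1) (hFL : d⁄dX K F = F * L) :
    coeff 3 F = coeff 0 L ^ 3 / 6 + coeff 0 L * coeff 1 L / 2 + coeff 2 L / 3 := by
  have hrec (n : ℕ) : coeff (n + 1) F * (n + 1) =
      ∑ i ∈ range (n + 1), coeff i F * coeff (n - i) L := by
    rw [← coeff_derivative, hFL, coeff_mul, Finset.Nat.sum_antidiagonal_eq_sum_range_succ_mk]
  have h1 := hrec 0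
  have h2 := hrec 1
  have h3 := hrec 2
  norm_num [sum_range_succ, hF] at h1 h2 h3
  rw [coeff_zero_eq_constantCoeff_apply]
  linear_combination h3 / 3 + constantCoeff L / 6 * h2
    + (coeff 1 L / 3 + constantCoeff L ^ 2 / 6) * h1

/-! ### The hypergeometric value as a power series in `a` -/

/-- The `m`-th term of `₂F₁(a, b; c; 1)`, as a polynomial in the parameter `a`. -/
noncomputable def gaussTerm (b c : ℝ) (m : ℕ) : ℝ[X] :=
  Polynomial.C ((ascPochhammer ℝ m).eval b / ((ascPochhammer ℝ m).eval c * m !)) * ascPochhammer ℝ m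

/-- The value `₂F₁(a, b; c; 1)`, as a formal power series in the parameter `a`: the sum of
`gaussTerm b c` in the topology of coefficientwise convergence. It is meaningful for `0 < b < c`,
and an unrelated default value where the terms are not summable. -/
noncomputable def gaussSeries (b c : ℝ) : ℝ⟦X⟧ := ∑' m, (gaussTerm b c m : ℝ⟦X⟧)

theorem coeff_gaussTerm (b c : ℝ) (m j : ℕ) :
    (gaussTerm b c m).coeff j =
      (ascPochhammer ℝ m).eval b / ((ascPochhammer ℝ m).eval c * m !) *
        (ascPochhammer ℝ m).coeff j :=
  Polynomial.coeff_C_mul _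

theorem eval_gaussTerm (a b c : ℝ) (m : ℕ) :
    (gaussTerm b c m).eval a = ordinaryHypergeometricCoefficient a b c m := by
  rw [gaussTerm, Polynomial.eval_mul, Polynomial.eval_C]
  ring

theorem gaussTerm_zero (b c : ℝ) : gaussTerm b c 0 = 1 := by
  simp [gaussTerm]

theorem coeff_gaussTerm_nonneg {b c : ℝ} (hb : 0 < b) (hc : 0 < c) (m j : ℕ) :
    0 ≤ (gaussTerm b c m).coeff j := by
  have hb' := ascPochhammer_pos m b hb
  have hc' := ascPochhammer_pos m c hc
  have hcoeff := coeff_ascPochhammer_nonneg (R := ℝ) m j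
  rw [coeff_gaussTerm]
  positivity

theorem coeff_gaussTerm_le {b c : ℝ} (hb : 0 < b) (hbc : b < c) (m j : ℕ) :
    (gaussTerm b c m).coeff j ≤
      (((c - b) / 2) ^ j)⁻¹ * ordinaryHypergeometricCoefficient ((c - b) / 2) b c m := by
  have ha : 0 < (c - b) / 2 := half_pos (sub_pos.mpr hbc)
  rw [← div_eq_inv_mul, le_div_iff₀ (pow_pos ha j), ← eval_gaussTerm]
  exact coeff_mul_pow_le_eval (coeff_gaussTerm_nonneg hb (hb.trans hbc) m) ha.le j

theorem summable_coeff_gaussTerm {b c : ℝ} (hb : 0 < b) (hbc : b < c) (j : ℕ) :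
    Summable fun m => (gaussTerm b c m).coeff j :=
  .of_nonneg_of_le (fun m => coeff_gaussTerm_nonneg hb (hb.trans hbc) m j)
    (fun m => coeff_gaussTerm_le hb hbc m j)
    ((summable_ordinaryHypergeometricCoefficient (half_pos (sub_pos.mpr hbc)) hb
      (by linarith)).mul_left _)

theorem tendsto_mul_coeff_gaussTerm {b c : ℝ} (hb : 0 < b) (hbc : b < c) (j : ℕ) :
    Tendsto (fun m : ℕ => (m : ℝ) * (gaussTerm b c m).coeff j) atTop (𝓝 0) := by
  have hlim := (tendsto_mul_ordinaryHypergeometricCoefficient (half_pos (sub_pos.mpr hbc)) hb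
    (by linarith : (c - b) / 2 + b < c)).const_mul (((c - b) / 2) ^ j)⁻¹
  rw [mul_zero] at hlim
  refine squeeze_zero
    (fun m => mul_nonneg m.cast_nonneg (coeff_gaussTerm_nonneg hb (hb.trans hbc) m j))
    (fun m => ?_) hlim
  rw [mul_left_comm]
  exact mul_le_mul_of_nonneg_left (coeff_gaussTerm_le hb hbc m j) m.cast_nonneg

theorem hasSum_gaussSeries {b c : ℝ} (hb : 0 < b) (hbc : b < c) :
    HasSum (fun m => (gaussTerm b c m : ℝ⟦X⟧)) (gaussSeries b c) := by
  refine Summable.hasSum ((WithPiTopology.summable_iff_summable_coeff ℝ).mpr fun j => ?_)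
  simpa only [Polynomial.coeff_coe] using summable_coeff_gaussTerm hb hbc j

theorem hasSum_coeff_gaussSeries {b c : ℝ} (hb : 0 < b) (hbc : b < c) (j : ℕ) :
    HasSum (fun m => (gaussTerm b c m).coeff j) (coeff j (gaussSeries b c)) := by
  simpa only [Polynomial.coeff_coe] using
    (WithPiTopology.hasSum_iff_hasSum_coeff ℝ).mp (hasSum_gaussSeries hb hbc) j

theorem constantCoeff_gaussSeries {b c : ℝ} (hb : 0 < b) (hbc : b < c) :
    constantCoeff (gaussSeries b c) = 1 := by
  have hzero : ∀ m ≠ 0, (gaussTerm b c m).coeff 0 = 0 := fun m hm => by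
    rw [coeff_gaussTerm, Polynomial.coeff_zero_eq_eval_zero, ascPochhammer_ne_zero_eval_zero _ hm,
      mul_zero]
  have hsum := hasSum_single 0 hzero
  rw [gaussTerm_zero, Polynomial.coeff_one_zero] at hsum
  rw [← coeff_zero_eq_constantCoeff_apply]
  exact (hasSum_coeff_gaussSeries hb hbc 0).unique hsum

/-- Gauss's contiguity `c (c - b - a) ₂F₁(a, b; c; 1) = (c - a) (c - b) ₂F₁(a, b; c + 1; 1)` holds
termwise up to a telescoping difference. -/
theorem gaussTerm_contiguity {b c : ℝ} (hb : 0 < b) (hbc : b < c) (m : ℕ) :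
    (1 - Polynomial.C (c - b)⁻¹ * Polynomial.X) * gaussTerm b c m
        - (1 - Polynomial.C c⁻¹ * Polynomial.X) * gaussTerm b (c + 1) m =
      Polynomial.C (-(c - b)⁻¹ * ↑(m + 1)) * gaussTerm b c (m + 1)
        - Polynomial.C (-(c - b)⁻¹ * m) * gaussTerm b c m := by
  have hc : 0 < c := hb.trans hbc
  have hcm : c + m ≠ 0 := by positivity
  have hcb : c - b ≠ 0 := (sub_pos.mpr hbc).ne'
  have hP := (ascPochhammer_pos m c hc).ne'
  refine Polynomial.funext fun a => ?_
  simp only [gaussTerm, Polynomial.eval_sub, Polynomial.eval_mul, Polynomial.eval_C,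
    Polynomial.eval_X, Polynomial.eval_one, ascPochhammer_succ_eval,
    ascPochhammer_eval_add_one hc.ne', Nat.factorial_succ, Nat.cast_mul, Nat.cast_succ]
  field_simp
  ring

theorem tendsto_C_mul_gaussTerm {b c : ℝ} (hb : 0 < b) (hbc : b < c) (r : ℝ) :
    Tendsto (fun m : ℕ => ((Polynomial.C (r * m) * gaussTerm b c m : ℝ[X]) : ℝ⟦X⟧)) atTop
      (𝓝 0) := by
  refine (WithPiTopology.tendsto_iff_coeff_tendsto ℝ _ _ _).mpr fun j => ?_
  simpa only [Polynomial.coeff_coe, Polynomial.coeff_C_mul, mul_assoc, mul_zero, map_zero] using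
    (tendsto_mul_coeff_gaussTerm hb hbc j).const_mul r

theorem gaussSeries_contiguity {b c : ℝ} (hb : 0 < b) (hbc : b < c) :
    (1 - C (c - b)⁻¹ * X) * gaussSeries b c = (1 - C c⁻¹ * X) * gaussSeries b (c + 1) := by
  set W : ℕ → ℝ[X] := fun m => Polynomial.C (-(c - b)⁻¹ * m) * gaussTerm b c m with hW
  have hsum := ((hasSum_gaussSeries hb hbc).mul_left (1 - C (c - b)⁻¹ * X)).sub
    ((hasSum_gaussSeries hb (by linarith : b < c + 1)).mul_left (1 - C c⁻¹ * X))
  have hterm (m : ℕ) : (1 - C (c - b)⁻¹ * X) * (gaussTerm b c m : ℝ⟦X⟧)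
      - (1 - C c⁻¹ * X) * (gaussTerm b (c + 1) m : ℝ⟦X⟧) = (W (m + 1) : ℝ⟦X⟧) - (W m : ℝ⟦X⟧) := by
    rw [← Polynomial.coe_sub, ← gaussTerm_contiguity hb hbc]
    simp
  have htel := hsum.tendsto_sum_nat
  simp only [hterm, sum_range_sub (fun m => (W m : ℝ⟦X⟧))] at htel
  have hlim := (tendsto_C_mul_gaussTerm hb hbc (-(c - b)⁻¹)).sub_const (W 0 : ℝ⟦X⟧)
  have hzero : (0 : ℝ⟦X⟧) - (W 0 : ℝ⟦X⟧) = 0 := by simp [hW]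
  rw [hzero] at hlim
  exact sub_eq_zero.mp (tendsto_nhds_unique htel hlim)

theorem coeff_gaussTerm_le_of_le {b c d : ℝ} (hb : 0 < b) (hc : 0 < c) (hcd : c ≤ d) (m j : ℕ) :
    (gaussTerm b d m).coeff (j + 1) ≤ c / d * (gaussTerm b c m).coeff (j + 1) := by
  have hd : 0 < d := hc.trans_le hcd
  cases m with
  | zero => simp [gaussTerm_zero, Polynomial.coeff_one]
  | succ m =>
    have hmono : (ascPochhammer ℝ m).eval (c + 1) ≤ (ascPochhammer ℝ m).eval (d + 1) :=
      monotoneOn_ascPochhammer_eval m (by simp; linarith) (by simp; linarith) (by linarith)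
    have hc' := ascPochhammer_pos m (c + 1) (by linarith)
    have hb' := ascPochhammer_pos (m + 1) b hb
    have hcoeff := coeff_ascPochhammer_nonneg (R := ℝ) (m + 1) (j + 1)
    calc (gaussTerm b d (m + 1)).coeff (j + 1)
        = (ascPochhammer ℝ (m + 1)).eval b / (d * (ascPochhammer ℝ m).eval (d + 1) * (m + 1)!) *
            (ascPochhammer ℝ (m + 1)).coeff (j + 1) := by
          rw [coeff_gaussTerm, ascPochhammer_succ_eval_left m d]
      _ ≤ (ascPochhammer ℝ (m + 1)).eval b / (d * (ascPochhammer ℝ m).eval (c + 1) * (m + 1)!) *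
            (ascPochhammer ℝ (m + 1)).coeff (j + 1) := by
          gcongr
      _ = c / d * (gaussTerm b c (m + 1)).coeff (j + 1) := by
          rw [coeff_gaussTerm, ascPochhammer_succ_eval_left m c]
          field_simp

theorem tendsto_gaussSeries_add_nat {b c : ℝ} (hb : 0 < b) (hbc : b < c) :
    Tendsto (fun N : ℕ => gaussSeries b (c + N)) atTop (𝓝 1) := by
  have hc : 0 < c := hb.trans hbc
  have hbN (N : ℕ) : b < c + N := by linarith [N.cast_nonneg (α := ℝ)]
  refine (WithPiTopology.tendsto_iff_coeff_tendsto ℝ _ _ _).mpr fun j => ?_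
  cases j with
  | zero => simp [constantCoeff_gaussSeries hb (hbN _)]
  | succ j =>
    have hdecay : Tendsto (fun N : ℕ => c / (c + N) * coeff (j + 1) (gaussSeries b c))
        atTop (𝓝 0) := by
      simpa using (tendsto_const_nhds.div_atTop (tendsto_atTop_add_const_left _ c
        tendsto_natCast_atTop_atTop)).mul_const (coeff (j + 1) (gaussSeries b c))
    rw [coeff_one, if_neg j.succ_ne_zero]
    refine squeeze_zero (fun N => ?_) (fun N => ?_) hdecay
    · exact (hasSum_coeff_gaussSeries hb (hbN N) _).nonneg fun m =>
        coeff_gaussTerm_nonneg hb (hb.trans (hbN N)) m _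
    · exact hasSum_le (fun m => coeff_gaussTerm_le_of_le hb hc (by simp) m j)
        (hasSum_coeff_gaussSeries hb (hbN N) _) ((hasSum_coeff_gaussSeries hb hbc _).mul_left _)

/-! ### The logarithmic derivative -/

/-- The Taylor series at `a = 0` of `ψ (c - a) - ψ (c - b - a)`, where `ψ` is the digamma function.
By Gauss's summation theorem this is the logarithmic derivative of `₂F₁(a, b; c; 1)` in `a`. -/
noncomputable def digammaGap (b c : ℝ) : ℝ⟦X⟧ :=
  PowerSeries.mk fun i => ∑' k : ℕ, ((c - b + k)⁻¹ ^ (i + 1) - (c + k)⁻¹ ^ (i + 1))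

theorem summable_inv_add_natCast_pow {a : ℝ} (ha : 0 < a) {p : ℕ} (hp : 1 < p) :
    Summable fun k : ℕ => (a + k)⁻¹ ^ p := by
  refine ((Real.summable_one_div_nat_add_rpow a p).mpr (by exact_mod_cast hp)).congr fun k => ?_
  rw [abs_of_pos (by positivity), rpow_natCast, one_div, inv_pow, add_comm]

theorem summable_coeff_digammaGap {b c : ℝ} (hb : 0 < b) (hbc : b < c) (i : ℕ) :
    Summable fun k : ℕ => (c - b + k)⁻¹ ^ (i + 1) - (c + k)⁻¹ ^ (i + 1) := by
  have hcb : 0 < c - b := sub_pos.mpr hbc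
  have hc : 0 < c := hb.trans hbc
  cases i with
  | zero =>
    refine .of_nonneg_of_le (fun k => ?_) (fun k => ?_)
      ((summable_inv_add_natCast_pow hcb one_lt_two).mul_left b)
    · rw [sub_nonneg]
      gcongr
      linarith
    · have hcbk : c - b + k ≠ 0 := by positivity
      have hck : c + k ≠ 0 := by positivity
      calc (c - b + k)⁻¹ ^ (0 + 1) - (c + k)⁻¹ ^ (0 + 1) = b * ((c - b + k)⁻¹ * (c + k)⁻¹) := by
            rw [zero_add, pow_one, pow_one, inv_sub_inv hcbk hck, div_eq_mul_inv, mul_inv]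
            ring
        _ ≤ b * (c - b + k)⁻¹ ^ 2 := by
            rw [sq]
            gcongr
            linarith
  | succ i =>
    exact (summable_inv_add_natCast_pow hcb (by omega)).sub
      (summable_inv_add_natCast_pow hc (by omega))

theorem digammaGap_eq_add_sub {b c : ℝ} (hb : 0 < b) (hbc : b < c) :
    digammaGap b c = digammaGap b (c + 1) + PowerSeries.mk (fun i => (c - b)⁻¹ ^ (i + 1))
      - PowerSeries.mk (fun i => c⁻¹ ^ (i + 1)) := by
  ext i
  simp only [digammaGap, map_add, map_sub, coeff_mk]
  rw [(summable_coeff_digammaGap hb hbc i).tsum_eq_zero_add]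
  have hshift (k : ℕ) : c - b + ↑(k + 1) = c + 1 - b + k ∧ c + ↑(k + 1) = c + 1 + k := by
    push_cast
    constructor <;> ring
  simp only [hshift, Nat.cast_zero, add_zero]
  ring

theorem tendsto_digammaGap_add_nat {b c : ℝ} :
    Tendsto (fun N : ℕ => digammaGap b (c + N)) atTop (𝓝 0) := by
  refine (WithPiTopology.tendsto_iff_coeff_tendsto ℝ _ _ _).mpr fun i => ?_
  refine (tendsto_sum_nat_add
    fun k : ℕ => (c - b + k)⁻¹ ^ (i + 1) - (c + k)⁻¹ ^ (i + 1)).congr fun N => ?_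
  rw [digammaGap, coeff_mk]
  refine tsum_congr fun k => ?_
  push_cast
  ring_nf

theorem derivative_sub_mul_digammaGap_contiguity {b c : ℝ} (hb : 0 < b) (hbc : b < c) :
    (1 - C (c - b)⁻¹ * X) * (d⁄dX ℝ (gaussSeries b c) - gaussSeries b c * digammaGap b c) =
      (1 - C c⁻¹ * X) * (d⁄dX ℝ (gaussSeries b (c + 1))
        - gaussSeries b (c + 1) * digammaGap b (c + 1)) := by
  have hF := gaussSeries_contiguity hb hbc
  have hdF := congrArg (d⁄dX ℝ) hF
  simp only [Derivation.leibniz, map_sub, derivative_C, derivative_X, smul_eq_mul,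
    Derivation.map_one_eq_zero] at hdF
  have hL := digammaGap_eq_add_sub hb hbc
  have hV := one_sub_C_mul_X_mul_mk_pow_succ (c - b)⁻¹
  have hU := one_sub_C_mul_X_mul_mk_pow_succ c⁻¹
  set U : ℝ⟦X⟧ := PowerSeries.mk fun i => c⁻¹ ^ (i + 1)
  linear_combination hdF - (digammaGap b (c + 1) - U) * hF
    - (1 - C (c - b)⁻¹ * X) * gaussSeries b c * hL - gaussSeries b c * hV
    + gaussSeries b (c + 1) * hU

theorem derivative_gaussSeries {b c : ℝ} (hb : 0 < b) (hbc : b < c) :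
    d⁄dX ℝ (gaussSeries b c) = gaussSeries b c * digammaGap b c := by
  set D : ℕ → ℝ⟦X⟧ := fun N =>
    d⁄dX ℝ (gaussSeries b (c + N)) - gaussSeries b (c + N) * digammaGap b (c + N) with hD
  have hlim : Tendsto D atTop (𝓝 0) := by
    have hF := tendsto_gaussSeries_add_nat hb hbc
    simpa using (tendsto_derivative hF).sub (hF.mul tendsto_digammaGap_add_nat)
  have hstep (N : ℕ) : (1 - C (c + N - b)⁻¹ * X) * D N = (1 - C (c + N)⁻¹ * X) * D (N + 1) := by
    simpa only [hD, Nat.cast_succ, add_assoc] using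
      derivative_sub_mul_digammaGap_contiguity hb (by linarith [N.cast_nonneg (α := ℝ)] : b < c + N)
  simpa [hD, sub_eq_zero] using eq_zero_of_one_sub_mul_eq_of_tendsto_zero hstep hlim 0

/-! ### The case `b = 1 / 2`, `c = 1` -/

theorem sum_range_inv_half_add_pow_sub (p N : ℕ) :
    ∑ k ∈ range N, ((1 - 1 / 2 + k : ℝ)⁻¹ ^ p - (1 + k : ℝ)⁻¹ ^ p) =
      2 ^ p * ∑ i ∈ range (2 * N), 1 / ((i : ℝ) + 1) ^ p
        - 2 * ∑ i ∈ range N, 1 / ((i : ℝ) + 1) ^ p := by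
  induction N with
  | zero => simp
  | succ N ih =>
    have hodd : (1 - 1 / 2 + N : ℝ)⁻¹ ^ p = 2 ^ p * (1 / (((2 * N : ℕ) : ℝ) + 1) ^ p) := by
      rw [← one_div_pow, ← mul_pow]
      congr 1
      push_cast
      field_simp
      ring
    have heven : (1 + N : ℝ)⁻¹ ^ p = 2 ^ p * (1 / (((2 * N + 1 : ℕ) : ℝ) + 1) ^ p) := by
      rw [← one_div_pow, ← mul_pow]
      congr 1
      push_cast
      field_simp
      ring
    have hinv : (1 + N : ℝ)⁻¹ ^ p = 1 / ((N : ℝ) + 1) ^ p := by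
      rw [inv_pow, one_div, add_comm]
    rw [sum_range_succ, ih, Nat.mul_succ, sum_range_succ _ (2 * N + 1),
      sum_range_succ _ (2 * N), sum_range_succ _ N]
    linear_combination hodd + heven - 2 * hinv

theorem tendsto_coeff_digammaGap_half_one (i : ℕ) :
    Tendsto (fun N : ℕ => 2 ^ (i + 1) * ∑ k ∈ range (2 * N), 1 / ((k : ℝ) + 1) ^ (i + 1)
      - 2 * ∑ k ∈ range N, 1 / ((k : ℝ) + 1) ^ (i + 1)) atTop
      (𝓝 (coeff i (digammaGap (1 / 2) 1))) := by
  rw [digammaGap, coeff_mk]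
  exact (summable_coeff_digammaGap one_half_pos one_half_lt_one i).hasSum.tendsto_sum_nat.congr
    fun N => sum_range_inv_half_add_pow_sub (i + 1) N

theorem coeff_digammaGap_half_one_of_hasSum {i : ℕ} {s : ℝ}
    (h : HasSum (fun k : ℕ => 1 / ((k : ℝ) + 1) ^ (i + 1)) s) :
    coeff i (digammaGap (1 / 2) 1) = 2 ^ (i + 1) * s - 2 * s :=
  tendsto_nhds_unique (tendsto_coeff_digammaGap_half_one i)
    (((h.tendsto_sum_nat.comp (tendsto_id.const_mul_atTop' two_pos)).const_mul _).sub
      (h.tendsto_sum_nat.const_mul _))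

theorem coeff_zero_digammaGap_half_one : coeff 0 (digammaGap (1 / 2) 1) = 2 * Real.log 2 := by
  have hgamma := Real.tendsto_harmonic_sub_log
  have hlim := (((hgamma.comp (tendsto_id.const_mul_atTop' two_pos)).sub hgamma).add_const
    (Real.log 2)).const_mul 2
  rw [sub_self, zero_add] at hlim
  refine tendsto_nhds_unique (tendsto_coeff_digammaGap_half_one 0) (hlim.congr' ?_)
  filter_upwards [eventually_gt_atTop 0] with N hN
  have hN' : (N : ℝ) ≠ 0 := by positivity
  simp only [Function.comp_apply, id_eq, harmonic]
  push_cast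
  rw [Real.log_mul two_ne_zero hN']
  simp only [one_div, pow_one]
  ring

theorem coeff_one_digammaGap_half_one : coeff 1 (digammaGap (1 / 2) 1) = π ^ 2 / 3 := by
  have hzeta : HasSum (fun k : ℕ => 1 / ((k : ℝ) + 1) ^ 2) (π ^ 2 / 6) := by
    simpa using (hasSum_nat_add_iff' 1).mpr hasSum_zeta_two
  rw [coeff_digammaGap_half_one_of_hasSum hzeta]
  ring

theorem coeff_two_digammaGap_half_one : coeff 2 (digammaGap (1 / 2) 1) = 6 * zeta3 := by
  have hzeta : Summable fun k : ℕ => 1 / ((k : ℝ) + 1) ^ 3 := by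
    simpa using (summable_nat_add_iff 1).mpr
      (Real.summable_one_div_nat_pow.mpr (by norm_num : 1 < 3))
  rw [coeff_digammaGap_half_one_of_hasSum hzeta.hasSum, zeta3]
  ring

theorem coeff_three_gaussSeries_half_one :
    coeff 3 (gaussSeries (1 / 2) 1) =
      2 * zeta3 + 4 / 3 * Real.log 2 ^ 3 + π ^ 2 / 3 * Real.log 2 := by
  rw [coeff_three_of_derivative_eq_mul (constantCoeff_gaussSeries one_half_pos one_half_lt_one)
    (derivative_gaussSeries one_half_pos one_half_lt_one), coeff_zero_digammaGap_half_one,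
    coeff_one_digammaGap_half_one, coeff_two_digammaGap_half_one]
  ring

theorem coeff_three_gaussTerm_half_one_succ (n : ℕ) :
    (gaussTerm (1 / 2) 1 (n + 1)).coeff 3 =
      (H n ^ 2 - H2 n) / (((n : ℝ) + 1) * 4 ^ (n + 1)) * (2 * (n + 1)).choose (n + 1) / 2 := by
  rw [coeff_gaussTerm, ascPochhammer_eval_one_half, ascPochhammer_eval_one,
    ascPochhammer_succ_coeff_three, Nat.factorial_succ]
  push_cast
  field_simp

theorem stmt2 :
    ∑' n : ℕ, (((H n)^2 - H2 n) / (((n:ℝ)+1) * 4^(n+1))) * (Nat.choose (2*(n+1)) (n+1) : ℝ)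
      = 4 * zeta3 + (8/3) * (Real.log 2)^3 + (2 * Real.pi^2/3) * Real.log 2 := by
  have hsum := hasSum_coeff_gaussSeries one_half_pos one_half_lt_one 3
  have hzero : (gaussTerm (1 / 2) 1 0).coeff 3 = 0 := by
    rw [gaussTerm_zero, Polynomial.coeff_one, if_neg three_ne_zero]
  have hhalf := (hasSum_nat_add_iff' 1).mpr hsum
  simp only [sum_range_one, hzero, sub_zero, coeff_three_gaussTerm_half_one_succ,
    coeff_three_gaussSeries_half_one] at hhalf
  have hseries := (hhalf.mul_left 2).tsum_eq
  simp only [mul_div_cancel₀ _ (two_ne_zero' ℝ)] at hseries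
  rw [hseries]
  ring
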